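/- Let Λ = ℤ ⊕ U³ ⊕ ℤ be the Mukai lattice with Mukai pairing ((r,α,s),(r',α',s')) = (α,α') − rs' − r's, and let {e,f} be a standard basis of a fixed hyperbolic summand of U³, so U³ = ⟨e,f⟩ ⊕ U². The orthogonal complement (1,0,−1)^⊥ in Λ equals U³ ⊕ ℤ(1,0,1). Let φ : (1,0,−1)^⊥ → (0,e+f,1)^⊥ be the map φ((r, ae+bf+α, r)) = (−a, re−(r+a)f+α, r+b) for α ∈ U³ orthogonal to e and f; φ is an isometry. Let G be the subgroup of O((1,0,−1)^⊥) generated by: (i) the restrictions to (1,0,−1)^⊥ of all isometries of Λ acting as an element of SO^+(U³) on U³ and as the identity on ℤ ⊕ ℤ (the H⁰ and H⁴ summands); and (ii) all compositions φ^{-1} ∘ ĝ ∘ φ, where ĝ is the restriction to (0,e+f,1)^⊥ of an isometry of Λ acting as an element of SO^+(U³) fixing e+f on U³ and as the identity on ℤ ⊕ ℤ. Then SO^+((1,0,−1)^⊥) ⊆ G. -/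

import Mathlib

open Matrix

/-- The ℝ-bilinear extension of the integral bilinear form with Gram matrix `M`. -/
def bilinR {ι : Type*} [Fintype ι] (M : Matrix ι ι ℤ) (x y : ι → ℝ) : ℝ :=
  x ⬝ᵥ ((M.map (Int.cast : ℤ → ℝ)) *ᵥ y)

/-- `w` is a tuple of vectors of `L ⊗ ℝ` spanning a maximal positive definite subspace:
its Gram matrix is positive definite and no longer tuple has positive definite Gram matrix. -/
def IsMaxPosTuple {ι : Type*} [Fintype ι] (M : Matrix ι ι ℤ) {k : ℕ}
    (w : Fin k → ι → ℝ) : Prop :=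
  (Matrix.of fun i j => bilinR M (w i) (w j)).PosDef ∧
    ∀ w' : Fin (k + 1) → ι → ℝ,
      ¬ (Matrix.of fun i j => bilinR M (w' i) (w' j)).PosDef

/-- `g` preserves the orientation of the positive cone of the lattice with Gram matrix `M`:
for every basis `w` of a maximal positive definite subspace `W` of `L ⊗ ℝ`, the determinant of
the matrix `(B(wᵢ, g wⱼ))` (which equals, up to the positive factor `det (Gram w)`, the
determinant of the orthogonal projection of `g|_W` back to `W`) is positive. -/
def OrientPres {ι : Type*} [Fintype ι] (M : Matrix ι ι ℤ) (g : Matrix ι ι ℤ) : Prop :=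
  ∀ (k : ℕ) (w : Fin k → ι → ℝ), IsMaxPosTuple M w →
    0 < (Matrix.of fun i j : Fin k =>
          bilinR M (w i) ((g.map (Int.cast : ℤ → ℝ)) *ᵥ w j)).det

/-- `g` is an isometry of the lattice with Gram matrix `M`. -/
def IsIsometry {ι : Type*} [Fintype ι] (M : Matrix ι ι ℤ) (g : Matrix ι ι ℤ) : Prop :=
  gᵀ * M * g = M

/-- A vector of a lattice is primitive if it is divisible only by units. -/
def IsPrimitiveVec {ι : Type*} (l : ι → ℤ) : Prop :=
  ∀ (c : ℤ) (x : ι → ℤ), l = c • x → IsUnit c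

/-- The Gram matrix of `U³` in the standard basis `e₁, f₁, e₂, f₂, e₃, f₃`
(with `e := e₁`, `f := f₁` the fixed hyperbolic summand). -/
def U3G : Matrix (Fin 6) (Fin 6) ℤ :=
  !![0,1,0,0,0,0;
     1,0,0,0,0,0;
     0,0,0,1,0,0;
     0,0,1,0,0,0;
     0,0,0,0,0,1;
     0,0,0,0,1,0]

/-- The Gram matrix of `K := (1,0,-1)^⊥ = U³ ⊕ ℤ(1,0,1)` inside the Mukai lattice
`Λ = ℤ ⊕ U³ ⊕ ℤ`, in the basis `b₀,…,b₅ = e₁,f₁,e₂,f₂,e₃,f₃` and `b₆ = (1,0,1)`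
(of square `-2`). -/
def G7 : Matrix (Fin 7) (Fin 7) ℤ :=
  !![0,1,0,0,0,0,0;
     1,0,0,0,0,0,0;
     0,0,0,1,0,0,0;
     0,0,1,0,0,0,0;
     0,0,0,0,0,1,0;
     0,0,0,0,1,0,0;
     0,0,0,0,0,0,-2]

/-- The isometry of the Mukai lattice `Λ = ℤ ⊕ U³ ⊕ ℤ` (coordinates
`(r, e₁, f₁, e₂, f₂, e₃, f₃, s)`) acting as `h` on `U³` and as the identity on the `H⁰`
and `H⁴` summands `ℤ ⊕ ℤ`. -/
def emb8 (h : Matrix (Fin 6) (Fin 6) ℤ) : Matrix (Fin 8) (Fin 8) ℤ :=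
  !![1, 0,     0,     0,     0,     0,     0,     0;
     0, h 0 0, h 0 1, h 0 2, h 0 3, h 0 4, h 0 5, 0;
     0, h 1 0, h 1 1, h 1 2, h 1 3, h 1 4, h 1 5, 0;
     0, h 2 0, h 2 1, h 2 2, h 2 3, h 2 4, h 2 5, 0;
     0, h 3 0, h 3 1, h 3 2, h 3 3, h 3 4, h 3 5, 0;
     0, h 4 0, h 4 1, h 4 2, h 4 3, h 4 4, h 4 5, 0;
     0, h 5 0, h 5 1, h 5 2, h 5 3, h 5 4, h 5 5, 0;
     0, 0,     0,     0,     0,     0,     0,     1]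

/-- The restriction to `K = (1,0,-1)^⊥ = U³ ⊕ ℤ(1,0,1)` (in the basis `b₀,…,b₆`) of the
isometry `emb8 h` of the Mukai lattice: it acts as `h` on `U³` and fixes `b₆ = (1,0,1)`. -/
def emb7 (h : Matrix (Fin 6) (Fin 6) ℤ) : Matrix (Fin 7) (Fin 7) ℤ :=
  !![h 0 0, h 0 1, h 0 2, h 0 3, h 0 4, h 0 5, 0;
     h 1 0, h 1 1, h 1 2, h 1 3, h 1 4, h 1 5, 0;
     h 2 0, h 2 1, h 2 2, h 2 3, h 2 4, h 2 5, 0;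
     h 3 0, h 3 1, h 3 2, h 3 3, h 3 4, h 3 5, 0;
     h 4 0, h 4 1, h 4 2, h 4 3, h 4 4, h 4 5, 0;
     h 5 0, h 5 1, h 5 2, h 5 3, h 5 4, h 5 5, 0;
     0,     0,     0,     0,     0,     0,     1]

/-- The matrix (with columns in Mukai-lattice coordinates `(r, e₁, f₁, e₂, f₂, e₃, f₃, s)`,
rows indexed by the basis `b₀,…,b₆` of `K`) of the isometry
`φ : K = (1,0,-1)^⊥ → K' = (0,e+f,1)^⊥`, `φ((r, ae+bf+α, r)) = (-a, re-(r+a)f+α, r+b)`: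
its columns are `φ(b₀) = (-1,-f,0)`, `φ(b₁) = (0,0,1)`, `φ(b₂) = (0,e₂,0)`, …,
`φ(b₅) = (0,f₃,0)`, `φ(b₆) = (0,e-f,1)`. -/
def PhiM : Matrix (Fin 8) (Fin 7) ℤ :=
  !![-1, 0, 0, 0, 0, 0, 0;
      0, 0, 0, 0, 0, 0, 1;
     -1, 0, 0, 0, 0, 0, -1;
      0, 0, 1, 0, 0, 0, 0;
      0, 0, 0, 1, 0, 0, 0;
      0, 0, 0, 0, 1, 0, 0;
      0, 0, 0, 0, 0, 1, 0;
      0, 1, 0, 0, 0, 0, 1]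


section Real

theorem det_pos_of_quad (N : Matrix (Fin 3) (Fin 3) ℝ)
    (h : ∀ y : Fin 3 → ℝ, y ≠ 0 → 0 < y ⬝ᵥ (N *ᵥ y)) : 0 < N.det := by
  by_contra hneg
  push Not at hneg
  let f : ℝ → ℝ := fun t => (t • N + (1 - t) • (1 : Matrix (Fin 3) (Fin 3) ℝ)).det
  have hf : Continuous f := by
    apply Continuous.matrix_det
    fun_prop
  have h0 : f 0 = 1 := by simp [f]
  have h1 : f 1 = N.det := by simp [f]
  have hmem : (0:ℝ) ∈ Set.Icc (f 1) (f 0) := by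
    rw [h0, h1]; exact ⟨hneg, zero_le_one⟩
  obtain ⟨t, ⟨ht0, ht1⟩, ht⟩ := intermediate_value_Icc' (zero_le_one) hf.continuousOn hmem
  obtain ⟨v, hv, hv0⟩ := Matrix.exists_mulVec_eq_zero_iff.2 ht
  have h2 : v ⬝ᵥ ((t • N + (1 - t) • (1 : Matrix (Fin 3) (Fin 3) ℝ)) *ᵥ v) = 0 := by
    rw [hv0]; simp
  rw [add_mulVec, smul_mulVec, smul_mulVec, one_mulVec, dotProduct_add, dotProduct_smul,
    dotProduct_smul, smul_eq_mul, smul_eq_mul] at h2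
  have h3 := h v hv
  have h4 : 0 < v ⬝ᵥ v := by
    have := (dotProduct_self_star_pos_iff (v := v)).2 hv
    simpa using this
  rcases eq_or_lt_of_le ht0 with h5 | h5
  · subst h5; simp at h2; exact hv h2
  · have : 0 < t * (v ⬝ᵥ N *ᵥ v) := mul_pos h5 h3
    have : 0 ≤ (1 - t) * (v ⬝ᵥ v) := mul_nonneg (by linarith) h4.le
    linarith

variable {ι κ : Type*} [Fintype ι] [Fintype κ]

theorem gram_quad {k : ℕ} (M : Matrix ι ι ℤ) (P : Matrix (Fin 3) ι ℝ) (Q : Matrix κ ι ℝ)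
    (hd : ∀ x y, 2 * bilinR M x y = (P *ᵥ x) ⬝ᵥ (P *ᵥ y) - (Q *ᵥ x) ⬝ᵥ (Q *ᵥ y))
    (w w' : Fin k → ι → ℝ) :
    (2 : ℝ) • (Matrix.of fun i j => bilinR M (w i) (w' j)) =
      (Matrix.of w * Pᵀ) * (Matrix.of w' * Pᵀ)ᵀ - (Matrix.of w * Qᵀ) * (Matrix.of w' * Qᵀ)ᵀ := by
  ext i j
  have := hd (w i) (w' j)
  simp only [Matrix.smul_apply, of_apply, smul_eq_mul, Matrix.sub_apply]
  rw [this]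
  simp only [mul_apply, transpose_apply, dotProduct, mulVec, of_apply]
  congr 1 <;> refine Finset.sum_congr rfl fun a _ => ?_ <;>
  · congr 1 <;> exact Finset.sum_congr rfl fun b _ => mul_comm _ _

theorem quad_aux {k : ℕ} {l : Type*} [Fintype l] (A : Matrix (Fin k) l ℝ) (y : Fin k → ℝ) :
      y ⬝ᵥ ((A * Aᵀ) *ᵥ y) = (y ᵥ* A) ⬝ᵥ (y ᵥ* A) := by
  rw [← mulVec_mulVec, dotProduct_mulVec, mulVec_transpose]

theorem gram_pos {k : ℕ} (M : Matrix ι ι ℤ) (P : Matrix (Fin 3) ι ℝ) (Q : Matrix κ ι ℝ)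
    (hd : ∀ x y, 2 * bilinR M x y = (P *ᵥ x) ⬝ᵥ (P *ᵥ y) - (Q *ᵥ x) ⬝ᵥ (Q *ᵥ y))
    (w : Fin k → ι → ℝ) (hw : (Matrix.of fun i j => bilinR M (w i) (w j)).PosDef)
    (y : Fin k → ℝ) (hy : y ≠ 0) :
    (y ᵥ* (Matrix.of w * Qᵀ)) ⬝ᵥ (y ᵥ* (Matrix.of w * Qᵀ)) <
      (y ᵥ* (Matrix.of w * Pᵀ)) ⬝ᵥ (y ᵥ* (Matrix.of w * Pᵀ)) := by
  have h1 := hw.dotProduct_mulVec_pos hy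
  have h2 := gram_quad M P Q hd w w
  have h3 : y ⬝ᵥ (((2 : ℝ) • (Matrix.of fun i j => bilinR M (w i) (w j))) *ᵥ y) =
    2 * (y ⬝ᵥ ((Matrix.of fun i j => bilinR M (w i) (w j)) *ᵥ y)) := by
    rw [smul_mulVec, dotProduct_smul, smul_eq_mul]
  rw [h2, sub_mulVec, dotProduct_sub, quad_aux, quad_aux] at h3
  simp only [star_trivial] at h1
  linarith

theorem key (M : Matrix ι ι ℤ) (P : Matrix (Fin 3) ι ℝ) (Q : Matrix κ ι ℝ)
    (hd : ∀ x y, 2 * bilinR M x y = (P *ᵥ x) ⬝ᵥ (P *ᵥ y) - (Q *ᵥ x) ⬝ᵥ (Q *ᵥ y))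
    (w w' : Fin 3 → ι → ℝ)
    (hw : (Matrix.of fun i j => bilinR M (w i) (w j)).PosDef)
    (hw' : (Matrix.of fun i j => bilinR M (w' i) (w' j)).PosDef) :
    0 < (Matrix.of fun i j => bilinR M (w i) (w' j)).det *
      ((Matrix.of w * Pᵀ).det * (Matrix.of w' * Pᵀ).det) := by
  have inv : ∀ w : Fin 3 → ι → ℝ, (Matrix.of fun i j => bilinR M (w i) (w j)).PosDef →
      (Matrix.of w * Pᵀ).det ≠ 0 := by
    intro w hw h0
    obtain ⟨v, hv, hv0⟩ := Matrix.exists_vecMul_eq_zero_iff.2 h0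
    have := gram_pos M P Q hd w hw v hv
    rw [hv0] at this
    have h2 : 0 ≤ (v ᵥ* (Matrix.of w * Qᵀ)) ⬝ᵥ (v ᵥ* (Matrix.of w * Qᵀ)) := 
      Finset.sum_nonneg fun i _ => mul_self_nonneg _
    simp only [zero_dotProduct] at this
    linarith
  have e := gram_quad M P Q hd w w'
  have p1 := gram_pos M P Q hd w hw
  have p2 := gram_pos M P Q hd w' hw'
  have i1 := inv w hw
  have i2 := inv w' hw'
  generalize Matrix.of w * Pᵀ = W at *
  generalize Matrix.of w' * Pᵀ = W' at *
  generalize Matrix.of w * Qᵀ = C at *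
  generalize Matrix.of w' * Qᵀ = C' at *
  generalize (Matrix.of fun i j => bilinR M (w i) (w' j)) = B at *
  have u1 : IsUnit W.det := isUnit_iff_ne_zero.2 i1
  have u2 : IsUnit W'.det := isUnit_iff_ne_zero.2 i2
  let X := W⁻¹ * ((2:ℝ) • B) * W'ᵀ⁻¹
  have hX : 0 < X.det := by
    apply det_pos_of_quad
    intro y hy
    have hc : ∀ V : Matrix (Fin 3) (Fin 3) ℝ, IsUnit V.det → y ᵥ* V⁻¹ ≠ 0 := by
      intro V hV h
      apply hy
      have := congrArg (fun z => z ᵥ* V) h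
      simpa [vecMul_vecMul, nonsing_inv_mul _ hV] using this
    have q1 := p1 _ (hc W u1)
    have q2 := p2 _ (hc W' u2)
    have hy1 : y ᵥ* W⁻¹ ᵥ* W = y := by rw [vecMul_vecMul, nonsing_inv_mul _ u1, vecMul_one]
    have hy2 : y ᵥ* W'⁻¹ ᵥ* W' = y := by rw [vecMul_vecMul, nonsing_inv_mul _ u2, vecMul_one]
    rw [hy1] at q1
    rw [hy2] at q2
    have ex : y ⬝ᵥ (X *ᵥ y) = y ⬝ᵥ y - (y ᵥ* W⁻¹ ᵥ* C) ⬝ᵥ (y ᵥ* W'⁻¹ ᵥ* C') := by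
      have hx : X = W⁻¹ * (W * W'ᵀ - C * C'ᵀ) * (W'⁻¹)ᵀ := by
        simp only [X, e, transpose_nonsing_inv]
      rw [hx, ← mulVec_mulVec, ← mulVec_mulVec, mulVec_transpose, dotProduct_mulVec, sub_mulVec,
        dotProduct_sub, ← mulVec_mulVec, ← mulVec_mulVec, mulVec_transpose, mulVec_transpose,
        dotProduct_mulVec, hy1, hy2, dotProduct_mulVec _ C]
    rw [ex]
    generalize y ᵥ* W⁻¹ ᵥ* C = a at *
    generalize y ᵥ* W'⁻¹ ᵥ* C' = b at *
    have : 0 ≤ (a - b) ⬝ᵥ (a - b) := Finset.sum_nonneg fun i _ => mul_self_nonneg _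
    simp only [dotProduct_sub, sub_dotProduct] at this
    rw [dotProduct_comm b a] at this
    linarith
  have hB : (2:ℝ) • B = W * X * W'ᵀ := by
    have u3 : IsUnit W'ᵀ.det := by rwa [det_transpose]
    simp only [X]
    rw [← Matrix.mul_assoc, ← Matrix.mul_assoc, mul_nonsing_inv _ u1, Matrix.one_mul,
      Matrix.mul_assoc, nonsing_inv_mul _ u3, Matrix.mul_one]
  have hdet := congrArg Matrix.det hB
  rw [det_mul, det_mul, det_transpose, det_smul] at hdet
  simp only [Fintype.card_fin] at hdet
  have : 0 < X.det * (W.det * W'.det) ^ 2 := by positivity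
  have h8 : 2 ^ 3 * (B.det * (W.det * W'.det)) = X.det * (W.det * W'.det) ^ 2 := by
    rw [← mul_assoc, hdet]; ring
  linarith

theorem no_four {k : ℕ} (hk : 3 < k) (M : Matrix ι ι ℤ) (P : Matrix (Fin 3) ι ℝ) (Q : Matrix κ ι ℝ)
    (hd : ∀ x y, 2 * bilinR M x y = (P *ᵥ x) ⬝ᵥ (P *ᵥ y) - (Q *ᵥ x) ⬝ᵥ (Q *ᵥ y))
    (w : Fin k → ι → ℝ) : ¬ (Matrix.of fun i j => bilinR M (w i) (w j)).PosDef := by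
  intro hw
  obtain ⟨v, hv, hv0⟩ : ∃ v : Fin k → ℝ, v ≠ 0 ∧ v ᵥ* (Matrix.of w * Pᵀ) = 0 := by
    have : ¬ Function.Injective (Matrix.vecMulLinear (Matrix.of w * Pᵀ)) := by
      intro hinj
      have := LinearMap.finrank_le_finrank_of_injective hinj
      simp at this
      omega
    rw [← LinearMap.ker_eq_bot, Submodule.eq_bot_iff] at this
    push Not at this
    obtain ⟨v, h1, h2⟩ := this
    exact ⟨v, h2, h1⟩
  have := gram_pos M P Q hd w hw v hv
  rw [hv0] at this
  have h2 : 0 ≤ (v ᵥ* (Matrix.of w * Qᵀ)) ⬝ᵥ (v ᵥ* (Matrix.of w * Qᵀ)) := 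
      Finset.sum_nonneg fun i _ => mul_self_nonneg _
  simp only [zero_dotProduct] at this
  linarith

theorem iso_bilinR [DecidableEq ι] (M g : Matrix ι ι ℤ) (hg : IsIsometry M g) (x y : ι → ℝ) :
    bilinR M ((g.map (Int.cast : ℤ → ℝ)) *ᵥ x) ((g.map (Int.cast : ℤ → ℝ)) *ᵥ y) =
      bilinR M x y := by
  unfold bilinR
  have h := congrArg (fun A : Matrix ι ι ℤ => A.map (Int.cast : ℤ → ℝ)) hg
  have hm : ∀ A B : Matrix ι ι ℤ, (A * B).map (Int.cast : ℤ → ℝ) =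
    A.map (Int.cast : ℤ → ℝ) * B.map (Int.cast : ℤ → ℝ) := fun A B =>
      Matrix.map_mul (f := Int.castRingHom ℝ)
  simp only [hm, transpose_map] at h
  conv_rhs => rw [← h]
  rw [← mulVec_mulVec, ← mulVec_mulVec, dotProduct_mulVec x, vecMul_transpose]

theorem hd_of (M : Matrix ι ι ℤ) (P : Matrix (Fin 3) ι ℤ) (Q : Matrix κ ι ℤ)
    (h : 2 • M = Pᵀ * P - Qᵀ * Q) (x y : ι → ℝ) :
    2 * bilinR M x y = ((P.map (Int.cast : ℤ → ℝ)) *ᵥ x) ⬝ᵥ ((P.map (Int.cast : ℤ → ℝ)) *ᵥ y)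
      - ((Q.map (Int.cast : ℤ → ℝ)) *ᵥ x) ⬝ᵥ ((Q.map (Int.cast : ℤ → ℝ)) *ᵥ y) := by
  have h' : (2 : ℝ) • M.map (Int.cast : ℤ → ℝ) =
      (P.map (Int.cast : ℤ → ℝ))ᵀ * P.map (Int.cast : ℤ → ℝ) -
      (Q.map (Int.cast : ℤ → ℝ))ᵀ * Q.map (Int.cast : ℤ → ℝ) := by
    ext i j
    have := congrArg (fun A : Matrix ι ι ℤ => ((A i j : ℤ) : ℝ)) h
    simpa [mul_apply] using this
  unfold bilinR
  rw [← smul_eq_mul, ← dotProduct_smul, ← smul_mulVec, h', sub_mulVec, dotProduct_sub,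
    ← mulVec_mulVec, ← mulVec_mulVec, dotProduct_mulVec x, dotProduct_mulVec x,
    vecMul_transpose, vecMul_transpose]

/-- data for the orientation character -/
structure Deco (M : Matrix ι ι ℤ) (P : Matrix (Fin 3) ι ℤ) (Q : Matrix κ ι ℤ) : Prop where
  dec : 2 • M = Pᵀ * P - Qᵀ * Q
  pm : P * M = P
  pp : P * Pᵀ = 2 • (1 : Matrix (Fin 3) (Fin 3) ℤ)

def chi (P : Matrix (Fin 3) ι ℤ) (g : Matrix ι ι ℤ) : ℤ := (P * g * Pᵀ).det

def tupR (P : Matrix (Fin 3) ι ℤ) : Fin 3 → ι → ℝ := fun i j => (P i j : ℝ)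

theorem tupR_bilin [DecidableEq ι] {M : Matrix ι ι ℤ} {P : Matrix (Fin 3) ι ℤ} {Q : Matrix κ ι ℤ}
    (D : Deco M P Q) (g : Matrix ι ι ℤ) (i j : Fin 3) :
    bilinR M (tupR P i) ((g.map (Int.cast : ℤ → ℝ)) *ᵥ tupR P j) =
      (((P * g * Pᵀ) i j : ℤ) : ℝ) := by
  rw [← D.pm]
  conv_rhs => rw [← D.pm]
  have : ∀ R : Matrix (Fin 3) ι ℤ, bilinR M (tupR R i) ((g.map (Int.cast : ℤ → ℝ)) *ᵥ tupR R j) =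
      (((R * M * g * Rᵀ) i j : ℤ) : ℝ) := by
    intro R
    rw [bilinR, mulVec_mulVec, dotProduct_mulVec]
    rw [Matrix.mul_assoc R M g]
    simp only [dotProduct, vecMul, mul_apply, tupR, map_apply, transpose_apply]
    push_cast
    rfl
  have h2 := this P
  rw [D.pm] at h2 ⊢
  rw [D.pm]
  exact h2

theorem tupR_gram [DecidableEq ι] {M : Matrix ι ι ℤ} {P : Matrix (Fin 3) ι ℤ} {Q : Matrix κ ι ℤ}
    (D : Deco M P Q) (i j : Fin 3) :
    bilinR M (tupR P i) (tupR P j) = if i = j then 2 else 0 := by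
  have := tupR_bilin D 1 i j
  have h1 : (1 : Matrix ι ι ℤ).map (Int.cast : ℤ → ℝ) = 1 := by
    ext a b; simp [one_apply]
  rw [h1, one_mulVec, Matrix.mul_one, D.pp] at this
  rw [this]
  simp [Matrix.smul_apply, one_apply]

theorem tupR_posDef [DecidableEq ι] {M : Matrix ι ι ℤ} {P : Matrix (Fin 3) ι ℤ} {Q : Matrix κ ι ℤ}
    (D : Deco M P Q) {k : ℕ} (f : Fin k → Fin 3) (hf : Function.Injective f) :
    (Matrix.of fun i j => bilinR M (tupR P (f i)) (tupR P (f j))).PosDef := by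
  have : (Matrix.of fun i j => bilinR M (tupR P (f i)) (tupR P (f j))) =
      Matrix.diagonal (fun _ : Fin k => (2:ℝ)) := by
    ext i j
    rw [of_apply, tupR_gram D, diagonal_apply]
    simp [hf.eq_iff]
  rw [this, posDef_diagonal_iff]
  intro; norm_num

theorem s_mul [DecidableEq ι] {M : Matrix ι ι ℤ} {P : Matrix (Fin 3) ι ℤ} {Q : Matrix κ ι ℤ}
    (D : Deco M P Q) (g : Matrix ι ι ℤ) (hg : IsIsometry M g) (w : Fin 3 → ι → ℝ)
    (hw : (Matrix.of fun i j => bilinR M (w i) (w j)).PosDef) :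
    0 < (Matrix.of (fun i => (g.map (Int.cast : ℤ → ℝ)) *ᵥ w i) * (P.map (Int.cast : ℤ → ℝ))ᵀ).det *
      ((Matrix.of w * (P.map (Int.cast : ℤ → ℝ))ᵀ).det * (chi P g : ℝ)) := by
  have hp := tupR_posDef D id Function.injective_id
  simp only [id] at hp
  have k1 := key M _ _ (hd_of M P Q D.dec) w (tupR P) hw hp
  have hgw : (Matrix.of fun i j => bilinR M ((g.map (Int.cast : ℤ → ℝ)) *ᵥ w i)
      ((g.map (Int.cast : ℤ → ℝ)) *ᵥ w j)).PosDef := by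
    simpa only [iso_bilinR M g hg] using hw
  have hgp : (Matrix.of fun i j => bilinR M ((g.map (Int.cast : ℤ → ℝ)) *ᵥ tupR P i)
      ((g.map (Int.cast : ℤ → ℝ)) *ᵥ tupR P j)).PosDef := by
    simpa only [iso_bilinR M g hg] using hp
  have k2 := key M _ _ (hd_of M P Q D.dec) _ _ hgw hgp
  simp only [iso_bilinR M g hg] at k2
  have e1 : (Matrix.of (tupR P) * (P.map (Int.cast : ℤ → ℝ))ᵀ).det = 8 := by
    have : Matrix.of (tupR P) * (P.map (Int.cast : ℤ → ℝ))ᵀ = (2:ℝ) • 1 := by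
      ext i j
      have := congrArg (fun A : Matrix (Fin 3) (Fin 3) ℤ => ((A i j : ℤ) : ℝ)) D.pp
      simpa [mul_apply, tupR, one_apply] using this
    rw [this, det_smul]; norm_num
  have e2 : (Matrix.of (fun i => (g.map (Int.cast : ℤ → ℝ)) *ᵥ tupR P i) *
      (P.map (Int.cast : ℤ → ℝ))ᵀ).det = (chi P g : ℝ) := by
    rw [chi, Int.cast_det, ← det_transpose]
    congr 1
    ext i j
    simp [mul_apply, tupR, mulVec, dotProduct, Finset.sum_mul]
    rw [Finset.sum_comm]
    refine Finset.sum_congr rfl fun a _ => Finset.sum_congr rfl fun b _ => by ring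
  rw [e1] at k1
  rw [e2] at k2
  generalize (of fun i j ↦ bilinR M (w i) (tupR P j)).det = b at *
  generalize (Matrix.of w * (P.map (Int.cast : ℤ → ℝ))ᵀ).det = x at *
  generalize (Matrix.of (fun i => (g.map (Int.cast : ℤ → ℝ)) *ᵥ w i) *
    (P.map (Int.cast : ℤ → ℝ))ᵀ).det = y at *
  have h1 : 0 < (b * (x * 8)) * (b * (y * (chi P g : ℝ))) := mul_pos k1 k2
  have h2 : (b * (x * 8)) * (b * (y * (chi P g : ℝ))) =
    (8 * b ^ 2) * (y * (x * (chi P g : ℝ))) := by ring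
  rw [h2] at h1
  exact pos_of_mul_pos_right h1 (by positivity)

theorem orient_of_chi [DecidableEq ι] {M : Matrix ι ι ℤ} {P : Matrix (Fin 3) ι ℤ}
    {Q : Matrix κ ι ℤ}
    (D : Deco M P Q) (g : Matrix ι ι ℤ) (hg : IsIsometry M g) (hc : 0 < chi P g) :
    OrientPres M g := by
  intro k w ⟨hw, hmax⟩
  have hk : k = 3 := by
    rcases lt_trichotomy k 3 with h | h | h
    · exact absurd (tupR_posDef D (Fin.castLE (Nat.succ_le_of_lt h)) (Fin.castLE_injective _))
        (hmax _)
    · exact h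
    · exact absurd hw (no_four h M _ _ (hd_of M P Q D.dec) w)
  subst hk
  have h1 := s_mul D g hg w hw
  have hgw : (Matrix.of fun i j => bilinR M ((g.map (Int.cast : ℤ → ℝ)) *ᵥ w i)
      ((g.map (Int.cast : ℤ → ℝ)) *ᵥ w j)).PosDef := by
    simpa only [iso_bilinR M g hg] using hw
  have h2 := key M _ _ (hd_of M P Q D.dec) w _ hw hgw
  have hc' : (0:ℝ) < chi P g := by exact_mod_cast hc
  generalize (Matrix.of w * (P.map (Int.cast : ℤ → ℝ))ᵀ).det = x at *
  generalize (Matrix.of (fun i => (g.map (Int.cast : ℤ → ℝ)) *ᵥ w i) *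
    (P.map (Int.cast : ℤ → ℝ))ᵀ).det = y at *
  have h3 : 0 < x * y := by
    have : 0 < chi P g * (x * y) := by linarith
    exact pos_of_mul_pos_right this hc'.le
  exact pos_of_mul_pos_left h2 h3.le

theorem chi_of_orient [DecidableEq ι] {M : Matrix ι ι ℤ} {P : Matrix (Fin 3) ι ℤ}
    {Q : Matrix κ ι ℤ}
    (D : Deco M P Q) (g : Matrix ι ι ℤ) (h : OrientPres M g) : 0 < chi P g := by
  have hp := tupR_posDef D id Function.injective_id
  have := h 3 (tupR P) ⟨hp, fun w' => no_four (by norm_num) M _ _ (hd_of M P Q D.dec) w'⟩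
  simp only [tupR_bilin D] at this
  have e : (Matrix.of fun i j : Fin 3 => (((P * g * Pᵀ) i j : ℤ) : ℝ)).det = (chi P g : ℝ) := by
    rw [chi, Int.cast_det]
    rfl
  rw [e] at this
  exact_mod_cast this

theorem chi_mul [DecidableEq ι] {M : Matrix ι ι ℤ} {P : Matrix (Fin 3) ι ℤ}
    {Q : Matrix κ ι ℤ}
    (D : Deco M P Q) (g g' : Matrix ι ι ℤ) (hg : IsIsometry M g) (hg' : IsIsometry M g')
    (hc : 0 < chi P g) (hc' : 0 < chi P g') : 0 < chi P (g * g') := by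
  have e2 : ∀ g : Matrix ι ι ℤ, (Matrix.of (fun i => (g.map (Int.cast : ℤ → ℝ)) *ᵥ tupR P i) *
      (P.map (Int.cast : ℤ → ℝ))ᵀ).det = (chi P g : ℝ) := by
    intro g
    rw [chi, Int.cast_det, ← det_transpose]
    congr 1
    ext i j
    simp [mul_apply, tupR, mulVec, dotProduct, Finset.sum_mul]
    rw [Finset.sum_comm]
    refine Finset.sum_congr rfl fun a _ => Finset.sum_congr rfl fun b _ => by ring
  have hp := tupR_posDef D id Function.injective_id
  simp only [id] at hp
  have hgp : (Matrix.of fun i j => bilinR M ((g'.map (Int.cast : ℤ → ℝ)) *ᵥ tupR P i)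
      ((g'.map (Int.cast : ℤ → ℝ)) *ᵥ tupR P j)).PosDef := by
    simpa only [iso_bilinR M g' hg'] using hp
  have h := s_mul D g hg _ hgp
  have hm : (g * g').map (Int.cast : ℤ → ℝ) =
    g.map (Int.cast : ℤ → ℝ) * g'.map (Int.cast : ℤ → ℝ) :=
      Matrix.map_mul (f := Int.castRingHom ℝ)
  simp only [mulVec_mulVec, ← hm] at h
  rw [e2, e2] at h
  have h' : 0 < chi P (g * g') * (chi P g' * chi P g) := by exact_mod_cast h
  exact pos_of_mul_pos_left h' (by positivity)

end Real

section Lat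

def P6 : Matrix (Fin 3) (Fin 6) ℤ := !![1,1,0,0,0,0; 0,0,1,1,0,0; 0,0,0,0,1,1]
def Q6 : Matrix (Fin 3) (Fin 6) ℤ := !![1,-1,0,0,0,0; 0,0,1,-1,0,0; 0,0,0,0,1,-1]
def P7 : Matrix (Fin 3) (Fin 7) ℤ := !![1,1,0,0,0,0,0; 0,0,1,1,0,0,0; 0,0,0,0,1,1,0]
def Q7 : Matrix (Fin 4) (Fin 7) ℤ :=
  !![1,-1,0,0,0,0,0; 0,0,1,-1,0,0,0; 0,0,0,0,1,-1,0; 0,0,0,0,0,0,2]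

theorem D6 : Deco U3G P6 Q6 := ⟨by decide, by decide, by decide⟩
theorem D7 : Deco G7 P7 Q7 := ⟨by decide, by decide, by decide⟩

/-- generating set -/
def GS : Set (Matrix (Fin 7) (Fin 7) ℤ)ˣ :=
        ({g : (Matrix (Fin 7) (Fin 7) ℤ)ˣ |
            ∃ h : Matrix (Fin 6) (Fin 6) ℤ,
              IsIsometry U3G h ∧ h.det = 1 ∧ OrientPres U3G h ∧
              (g : Matrix (Fin 7) (Fin 7) ℤ) = emb7 h} ∪
         {g : (Matrix (Fin 7) (Fin 7) ℤ)ˣ |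
            ∃ h : Matrix (Fin 6) (Fin 6) ℤ,
              IsIsometry U3G h ∧ h.det = 1 ∧ OrientPres U3G h ∧
              h *ᵥ ![1, 1, 0, 0, 0, 0] = ![1, 1, 0, 0, 0, 0] ∧
              PhiM * (g : Matrix (Fin 7) (Fin 7) ℤ) = emb8 h * PhiM})

theorem det_emb7 (h : Matrix (Fin 6) (Fin 6) ℤ) : (emb7 h).det = h.det := by
  rw [det_succ_row _ 6, Finset.sum_eq_single 6]
  · have : (emb7 h).submatrix (Fin.succAbove 6) (Fin.succAbove 6) = h := by
      ext i j
      fin_cases i <;> fin_cases j <;> rfl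
    rw [this]
    have h6 : (emb7 h) 6 6 = 1 := rfl
    rw [h6]
    norm_num
  · intro j _ hj
    have h6 : (emb7 h) 6 j = 0 := by
      fin_cases j
      all_goals first | rfl | exact absurd rfl hj
    rw [h6]; ring
  · simp

theorem chi_emb7 (h : Matrix (Fin 6) (Fin 6) ℤ) : chi P7 (emb7 h) = chi P6 h := by
  unfold chi
  congr 1
  ext i j
  fin_cases i <;> fin_cases j <;>
    simp [P6, P7, emb7, mul_apply, Fin.sum_univ_succ, vecMul, dotProduct]

theorem G7_cast : ∀ i j : Fin 6, G7 i.castSucc j.castSucc = U3G i j := by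
  intro i j
  fin_cases i <;> fin_cases j <;> rfl

theorem iso_emb7 (h : Matrix (Fin 6) (Fin 6) ℤ) : IsIsometry G7 (emb7 h) ↔ IsIsometry U3G h := by
  have e : ∀ i j : Fin 6, ((emb7 h)ᵀ * G7 * emb7 h) i.castSucc j.castSucc = (hᵀ * U3G * h) i j := by
    intro i j
    have h1 : ∀ i j : Fin 6, (emb7 h) i.castSucc j.castSucc = h i j := by
      intro i j
      fin_cases i <;> fin_cases j <;> rfl
    have h2 : ∀ j : Fin 6, (emb7 h) (Fin.last 6) j.castSucc = 0 := by
      intro j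
      fin_cases j <;> rfl
    have h3 : ∀ i j : Fin 6, G7 i.castSucc j.castSucc = U3G i j := G7_cast
    simp only [mul_apply, transpose_apply, Fin.sum_univ_castSucc (n := 6), h1, h2, h3, zero_mul,
      mul_zero, add_zero]
  have e2 : ∀ i : Fin 7, ((emb7 h)ᵀ * G7 * emb7 h) i (Fin.last 6) = G7 i (Fin.last 6) ∧
     ((emb7 h)ᵀ * G7 * emb7 h) (Fin.last 6) i = G7 (Fin.last 6) i := by
    have c1 : ∀ j : Fin 7, (emb7 h) j (Fin.last 6) = if j = Fin.last 6 then 1 else 0 := by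
      intro j
      fin_cases j <;> rfl
    have c2 : ∀ j : Fin 7, (emb7 h) (Fin.last 6) j = if j = Fin.last 6 then 1 else 0 := by
      intro j
      fin_cases j <;> rfl
    have c3 : ∀ j : Fin 7, G7 j (Fin.last 6) = if j = Fin.last 6 then -2 else 0 := by decide
    have c4 : ∀ j : Fin 7, G7 (Fin.last 6) j = if j = Fin.last 6 then -2 else 0 := by decide
    intro i
    constructor <;> simp [mul_apply, c1, c2, c3, c4, -Fin.reduceLast] <;> split_ifs <;> rfl
  constructor
  · intro hh
    ext i j
    rw [← e, hh, G7_cast]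
  · intro hh
    ext i j
    refine Fin.lastCases (e2 j).2 (fun i => ?_) i
    refine Fin.lastCases (e2 _).1 (fun j => ?_) j
    rw [e, hh, G7_cast]

/-- good elements -/
def Good (γ : (Matrix (Fin 7) (Fin 7) ℤ)ˣ) : Prop :=
  γ ∈ Subgroup.closure GS ∧ IsIsometry G7 (γ : Matrix (Fin 7) (Fin 7) ℤ) ∧
    (γ : Matrix (Fin 7) (Fin 7) ℤ).det = 1 ∧ 0 < chi P7 (γ : Matrix (Fin 7) (Fin 7) ℤ)

theorem iso_mul {g g' : Matrix (Fin 7) (Fin 7) ℤ} (h : IsIsometry G7 g) (h' : IsIsometry G7 g') :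
    IsIsometry G7 (g * g') := by
  unfold IsIsometry at *
  rw [transpose_mul]
  calc g'ᵀ * gᵀ * G7 * (g * g') = g'ᵀ * (gᵀ * G7 * g) * g' := by simp only [Matrix.mul_assoc]
    _ = _ := by rw [h, h']

theorem iso_inv {γ : (Matrix (Fin 7) (Fin 7) ℤ)ˣ}
    (h : IsIsometry G7 (γ : Matrix (Fin 7) (Fin 7) ℤ)) :
    IsIsometry G7 ((γ⁻¹ : (Matrix (Fin 7) (Fin 7) ℤ)ˣ) : Matrix (Fin 7) (Fin 7) ℤ) := by
  unfold IsIsometry at *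
  have e : (γ : Matrix (Fin 7) (Fin 7) ℤ) * ((γ⁻¹ : (Matrix (Fin 7) (Fin 7) ℤ)ˣ) : Matrix _ _ ℤ) = 1 :=
    γ.mul_inv
  generalize ((γ⁻¹ : (Matrix (Fin 7) (Fin 7) ℤ)ˣ) : Matrix (Fin 7) (Fin 7) ℤ) = d at *
  generalize (γ : Matrix (Fin 7) (Fin 7) ℤ) = g at *
  calc dᵀ * G7 * d = dᵀ * (gᵀ * G7 * g) * d := by rw [h]
    _ = (g * d)ᵀ * G7 * (g * d) := by rw [transpose_mul]; simp only [Matrix.mul_assoc]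
    _ = G7 := by rw [e]; simp

theorem Good.mul {a b : (Matrix (Fin 7) (Fin 7) ℤ)ˣ} (ha : Good a) (hb : Good b) :
    Good (a * b) := by
  obtain ⟨a1, a2, a3, a4⟩ := ha
  obtain ⟨b1, b2, b3, b4⟩ := hb
  refine ⟨mul_mem a1 b1, iso_mul a2 b2, ?_, chi_mul D7 _ _ a2 b2 a4 b4⟩
  rw [Units.val_mul, det_mul, a3, b3, one_mul]

theorem Good.inv {a : (Matrix (Fin 7) (Fin 7) ℤ)ˣ} (ha : Good a) : Good a⁻¹ := by
  obtain ⟨a1, a2, a3, a4⟩ := ha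
  have i := iso_inv a2
  have e : (a : Matrix (Fin 7) (Fin 7) ℤ) * ((a⁻¹ : (Matrix (Fin 7) (Fin 7) ℤ)ˣ) : Matrix _ _ ℤ) = 1 :=
    a.mul_inv
  refine ⟨inv_mem a1, i, ?_, ?_⟩
  · have := congrArg Matrix.det e
    rwa [det_mul, a3, one_mul, det_one] at this
  · -- P a⁻¹ Pᵀ = P G7 a⁻¹ Pᵀ = P aᵀ G7 Pᵀ
    unfold IsIsometry at a2
    generalize ((a⁻¹ : (Matrix (Fin 7) (Fin 7) ℤ)ˣ) : Matrix (Fin 7) (Fin 7) ℤ) = d at *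
    generalize (a : Matrix (Fin 7) (Fin 7) ℤ) = g at *
    have h1 : G7 * d = gᵀ * G7 := by
      calc G7 * d = (gᵀ * G7 * g) * d := by rw [a2]
        _ = gᵀ * G7 * (g * d) := by simp only [Matrix.mul_assoc]
        _ = _ := by rw [e, Matrix.mul_one]
    have h2 : G7 * P7ᵀ = P7ᵀ := by decide
    have : P7 * d * P7ᵀ = (P7 * g * P7ᵀ)ᵀ := by
      conv_lhs => rw [← D7.pm]
      rw [Matrix.mul_assoc P7 G7 d, h1]
      conv_lhs => rw [D7.pm]
      rw [Matrix.mul_assoc, Matrix.mul_assoc, h2]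
      simp only [transpose_mul, transpose_transpose, Matrix.mul_assoc]
    unfold chi at *
    rw [this, det_transpose]
    exact a4

theorem good_one : Good 1 := by
  refine ⟨one_mem _, ?_, ?_, ?_⟩
  · simp [IsIsometry]
  · simp
  · rw [Units.val_one]; decide

def Reach (w w' : Fin 7 → ℤ) : Prop :=
  ∃ γ : (Matrix (Fin 7) (Fin 7) ℤ)ˣ, Good γ ∧ (γ : Matrix (Fin 7) (Fin 7) ℤ) *ᵥ w = w'

theorem Reach.rfl' (w : Fin 7 → ℤ) : Reach w w := ⟨1, good_one, by simp⟩

theorem Reach.trans {a b c : Fin 7 → ℤ} (h : Reach a b) (h' : Reach b c) : Reach a c := by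
  obtain ⟨x, hx, rfl⟩ := h
  obtain ⟨y, hy, rfl⟩ := h'
  exact ⟨y * x, hy.mul hx, by simp [mulVec_mulVec]⟩

theorem Reach.symm {a b : Fin 7 → ℤ} (h : Reach a b) : Reach b a := by
  obtain ⟨x, hx, rfl⟩ := h
  exact ⟨x⁻¹, hx.inv, by simp [mulVec_mulVec]⟩

theorem Reach.norm {a b : Fin 7 → ℤ} (h : Reach a b) : b ⬝ᵥ (G7 *ᵥ b) = a ⬝ᵥ (G7 *ᵥ a) := by
  obtain ⟨x, hx, rfl⟩ := h
  have := hx.2.1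
  unfold IsIsometry at this
  conv_rhs => rw [← this]
  rw [← mulVec_mulVec, ← mulVec_mulVec, dotProduct_mulVec a, vecMul_transpose]

theorem good_emb (h : Matrix (Fin 6) (Fin 6) ℤ) (h1 : IsIsometry U3G h) (h2 : h.det = 1)
    (h3 : 0 < chi P6 h) : ∃ γ, Good γ ∧ (γ : Matrix (Fin 7) (Fin 7) ℤ) = emb7 h := by
  have hu : IsUnit (emb7 h) := by
    rw [isUnit_iff_isUnit_det, det_emb7, h2]; exact isUnit_one
  obtain ⟨γ, hγ⟩ := hu
  refine ⟨γ, ⟨Subgroup.subset_closure (Or.inl ⟨h, h1, h2, orient_of_chi D6 h h1 h3, hγ⟩), ?_, ?_, ?_⟩,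
    hγ⟩
  · rw [hγ, iso_emb7]; exact h1
  · rw [hγ, det_emb7, h2]
  · rw [hγ, chi_emb7]; exact h3

def hB : Matrix (Fin 6) (Fin 6) ℤ :=
  !![1,0,0,1,0,0; 0,1,0,-1,0,0; 1,-1,1,1,0,0; 0,0,0,1,0,0; 0,0,0,0,1,0; 0,0,0,0,0,1]
def B7 : Matrix (Fin 7) (Fin 7) ℤ :=
  !![1,0,0,0,0,0,0; 0,1,0,-1,0,0,0; 1,0,1,1,0,0,2; 0,0,0,1,0,0,0; 0,0,0,0,1,0,0; 0,0,0,0,0,1,0;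
     0,0,0,1,0,0,1]
def hR : Matrix (Fin 6) (Fin 6) ℤ :=
  !![0,0,1,0,0,0; 0,0,0,1,0,0; 0,0,0,0,1,0; 0,0,0,0,0,1; 1,0,0,0,0,0; 0,1,0,0,0,0]
def hS : Matrix (Fin 6) (Fin 6) ℤ :=
  !![1,0,0,0,0,0; 0,1,0,0,0,0; 0,0,0,1,0,0; 0,0,1,0,0,0; 0,0,0,0,0,1; 0,0,0,0,1,0]
def h4 : Matrix (Fin 6) (Fin 6) ℤ :=
  !![1,0,0,0,0,0; 0,1,0,0,0,0; 0,0,1,0,0,-1; 0,0,0,1,0,0; 0,0,0,1,1,0; 0,0,0,0,0,1]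
def h5 : Matrix (Fin 6) (Fin 6) ℤ :=
  !![1,0,0,0,0,0; 0,1,0,0,0,0; 0,0,1,0,-1,0; 0,0,0,1,0,0; 0,0,0,0,1,0; 0,0,0,1,0,1]
def h0 : Matrix (Fin 6) (Fin 6) ℤ :=
  !![1,0,0,1,0,0; 0,1,0,0,0,0; 0,-1,1,0,0,0; 0,0,0,1,0,0; 0,0,0,0,1,0; 0,0,0,0,0,1]
def h1 : Matrix (Fin 6) (Fin 6) ℤ :=
  !![1,0,0,0,0,0; 0,1,0,1,0,0; -1,0,1,0,0,0; 0,0,0,1,0,0; 0,0,0,0,1,0; 0,0,0,0,0,1]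

theorem det_B7 : B7.det = 1 := by
  simp [B7, det_succ_row_zero, Fin.sum_univ_succ, Fin.succAbove]

theorem det_hB : hB.det = 1 := by
  simp [hB, det_succ_row_zero, Fin.sum_univ_succ, Fin.succAbove]

theorem det_hR : hR.det = 1 := by
  simp [hR, det_succ_row_zero, Fin.sum_univ_succ, Fin.succAbove]

theorem det_hS : hS.det = 1 := by
  simp [hS, det_succ_row_zero, Fin.sum_univ_succ, Fin.succAbove]

theorem det_h4 : h4.det = 1 := by
  simp [h4, det_succ_row_zero, Fin.sum_univ_succ, Fin.succAbove]

theorem det_h5 : h5.det = 1 := by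
  simp [h5, det_succ_row_zero, Fin.sum_univ_succ, Fin.succAbove]

theorem det_h0 : h0.det = 1 := by
  simp [h0, det_succ_row_zero, Fin.sum_univ_succ, Fin.succAbove]

theorem det_h1 : h1.det = 1 := by
  simp [h1, det_succ_row_zero, Fin.sum_univ_succ, Fin.succAbove]

theorem good_B : ∃ γ, Good γ ∧ (γ : Matrix (Fin 7) (Fin 7) ℤ) = B7 := by
  have hu : IsUnit B7 := by
    rw [isUnit_iff_isUnit_det, det_B7]; exact isUnit_one
  have hi : IsIsometry U3G hB := by unfold IsIsometry; decide
  obtain ⟨γ, hγ⟩ := hu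
  refine ⟨γ, ⟨Subgroup.subset_closure (Or.inr ⟨hB, hi, det_hB,
    orient_of_chi D6 hB hi (by decide), by decide, ?_⟩), ?_, ?_, ?_⟩, hγ⟩
  · rw [hγ]; decide
  · rw [hγ]; unfold IsIsometry; decide
  · rw [hγ, det_B7]
  · rw [hγ]; decide

/-- states -/
def St (a b x y z t c : ℤ) : Fin 7 → ℤ := ![2*a, 2*b, 2*x, 2*y, 2*z, 2*t, c]

theorem emb7_St (h : Matrix (Fin 6) (Fin 6) ℤ) (a b x y z t c : ℤ) :
    emb7 h *ᵥ St a b x y z t c =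
      let v := h *ᵥ ![a,b,x,y,z,t]
      St (v 0) (v 1) (v 2) (v 3) (v 4) (v 5) c := by
  ext i
  fin_cases i <;> simp [emb7, St, mulVec, dotProduct, Fin.sum_univ_succ] <;> ring

theorem reach_emb (h : Matrix (Fin 6) (Fin 6) ℤ) (h1 : IsIsometry U3G h) (h2 : h.det = 1)
    (h3 : 0 < chi P6 h) (a b x y z t c : ℤ) : Reach (St a b x y z t c) 
      (let v := h *ᵥ ![a,b,x,y,z,t]
      St (v 0) (v 1) (v 2) (v 3) (v 4) (v 5) c) := by
  obtain ⟨γ, hγ, e⟩ := good_emb h h1 h2 h3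
  exact ⟨γ, hγ, by rw [e, emb7_St]⟩

theorem stepR (a b x y z t c : ℤ) : Reach (St a b x y z t c) (St x y z t a b c) := by
  have := reach_emb hR (by unfold IsIsometry; decide) det_hR (by decide) a b x y z t c
  simpa [hR, mulVec, dotProduct, Fin.sum_univ_succ] using this

theorem stepS (a b x y z t c : ℤ) : Reach (St a b x y z t c) (St a b y x t z c) := by
  have := reach_emb hS (by unfold IsIsometry; decide) det_hS (by decide) a b x y z t c
  simpa [hS, mulVec, dotProduct, Fin.sum_univ_succ] using this

theorem step4 (a b x y z t c : ℤ) :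
    Reach (St a b x y z t c) (St a b (x - t) y (z + y) t c) := by
  have := reach_emb h4 (by unfold IsIsometry; decide) det_h4 (by decide) a b x y z t c
  simpa [h4, mulVec, dotProduct, Fin.sum_univ_succ, sub_eq_add_neg, add_comm] using this

theorem step5 (a b x y z t c : ℤ) :
    Reach (St a b x y z t c) (St a b (x - z) y z (t + y) c) := by
  have := reach_emb h5 (by unfold IsIsometry; decide) det_h5 (by decide) a b x y z t c
  simpa [h5, mulVec, dotProduct, Fin.sum_univ_succ, sub_eq_add_neg, add_comm] using this

theorem step0 (a b x y z t c : ℤ) :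
    Reach (St a b x y z t c) (St (a + y) b (x - b) y z t c) := by
  have := reach_emb h0 (by unfold IsIsometry; decide) det_h0 (by decide) a b x y z t c
  simpa [h0, mulVec, dotProduct, Fin.sum_univ_succ, sub_eq_add_neg, add_comm] using this

theorem step1 (a b x y z t c : ℤ) :
    Reach (St a b x y z t c) (St a (b + y) (x - a) y z t c) := by
  have := reach_emb h1 (by unfold IsIsometry; decide) det_h1 (by decide) a b x y z t c
  simpa [h1, mulVec, dotProduct, Fin.sum_univ_succ, sub_eq_add_neg, add_comm] using this

theorem stepB (a b x y z t c : ℤ) :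
    Reach (St a b x y z t c) (St a b (x + c + y) y z t (c + 2 * y)) := by
  obtain ⟨γ, hγ, e⟩ := good_B
  have h : Reach (St a b x y z t c) (St a (b - y) (x + y + c + a) y z t (c + 2 * y)) := by
    refine ⟨γ, hγ, ?_⟩
    rw [e]
    ext i
    fin_cases i <;> simp [B7, St, mulVec, dotProduct, Fin.sum_univ_succ] <;> ring
  have h2 := step1 a (b - y) (x + y + c + a) y z t (c + 2 * y)
  have h3 := h.trans h2
  have e1 : b - y + y = b := by ring
  have e2 : x + y + c + a - a = x + c + y := by ring
  rwa [e1, e2] at h3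

theorem iter (f : ℤ → Fin 7 → ℤ) (h : ∀ n, Reach (f n) (f (n + 1))) (n : ℤ) :
    Reach (f 0) (f n) := by
  induction n using Int.induction_on with
  | zero => exact Reach.rfl' _
  | succ i ih => exact ih.trans (h _)
  | pred i ih =>
    have := (h (-(i:ℤ) - 1)).symm
    rw [sub_add_cancel] at this
    exact ih.trans this

theorem it4 (a b x y z t c n : ℤ) :
    Reach (St a b x y z t c) (St a b (x - n * t) y (z + n * y) t c) := by
  have := iter (fun n => St a b (x - n * t) y (z + n * y) t c) (fun n => by
    convert step4 a b (x - n * t) y (z + n * y) t c using 2 <;> ring) n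
  simpa using this

theorem it5 (a b x y z t c n : ℤ) :
    Reach (St a b x y z t c) (St a b (x - n * z) y z (t + n * y) c) := by
  have := iter (fun n => St a b (x - n * z) y z (t + n * y) c) (fun n => by
    convert step5 a b (x - n * z) y z (t + n * y) c using 2 <;> ring) n
  simpa using this

theorem it0 (a b x y z t c n : ℤ) :
    Reach (St a b x y z t c) (St (a + n * y) b (x - n * b) y z t c) := by
  have := iter (fun n => St (a + n * y) b (x - n * b) y z t c) (fun n => by
    convert step0 (a + n * y) b (x - n * b) y z t c using 2 <;> ring) n
  simpa using this

theorem it1 (a b x y z t c n : ℤ) :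
    Reach (St a b x y z t c) (St a (b + n * y) (x - n * a) y z t c) := by
  have := iter (fun n => St a (b + n * y) (x - n * a) y z t c) (fun n => by
    convert step1 a (b + n * y) (x - n * a) y z t c using 2 <;> ring) n
  simpa using this

theorem itB (a b x y z t c n : ℤ) :
    Reach (St a b x y z t c) (St a b (x + n * c + n ^ 2 * y) y z t (c + 2 * n * y)) := by
  have := iter (fun n => St a b (x + n * c + n ^ 2 * y) y z t (c + 2 * n * y)) (fun n => by
    convert stepB a b (x + n * c + n ^ 2 * y) y z t (c + 2 * n * y) using 2 <;> ring) n
  simpa using this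

theorem norm_St (a b x y z t c : ℤ) : St a b x y z t c ⬝ᵥ (G7 *ᵥ St a b x y z t c) =
    8 * (a * b + x * y + z * t) - 2 * c ^ 2 := by
  simp [G7, St, mulVec, dotProduct, Fin.sum_univ_succ]; ring

/-- end game -/
theorem fin_y (y c : ℤ) (hc : c = 1 ∨ c = -1) :
    Reach (St 0 0 0 y 0 0 c) (St 0 0 0 0 0 0 1) := by
  have A : Reach (St 0 0 0 y 0 0 c) (St 0 0 0 0 0 0 c) := by
    refine (stepS _ _ _ _ _ _ _).trans ?_
    have := itB 0 0 y 0 0 0 c (-c * y)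
    have e : y + (-c * y) * c + (-c * y) ^ 2 * 0 = 0 := by
      rcases hc with rfl | rfl <;> ring
    rw [e] at this
    simpa using this
  refine A.trans ?_
  rcases hc with rfl | rfl
  · exact Reach.rfl' _
  · have s1 := itB 0 0 0 0 0 0 (-1) (-1)
    have s2 := stepS 0 0 1 0 0 0 (-1)
    have s3 := itB 0 0 0 1 0 0 (-1) 1
    have s4 := stepS 0 0 0 1 0 0 1
    have s5 := itB 0 0 1 0 0 0 1 (-1)
    norm_num at s1 s2 s3 s4 s5
    exact s1.trans (s2.trans (s3.trans (s4.trans s5)))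

theorem descent (a b x y z t c : ℤ) (hq : c ^ 2 - 1 = 4 * (a * b + x * y + z * t)) :
    Reach (St a b x y z t c) (St 0 0 0 0 0 0 1) := by
  let p : ℕ → Prop := fun m => 0 < m ∧ ∃ a' b' x' y' z' t' c',
    Reach (St a b x y z t c) (St a' b' x' y' z' t' c') ∧ y'.natAbs = m
  have mk : ∀ a' b' x' y' z' t' c', Reach (St a b x y z t c) (St a' b' x' y' z' t' c') →
      (a' ≠ 0 → p a'.natAbs) ∧ (b' ≠ 0 → p b'.natAbs) ∧ (x' ≠ 0 → p x'.natAbs) ∧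
      (y' ≠ 0 → p y'.natAbs) ∧ (z' ≠ 0 → p z'.natAbs) ∧ (t' ≠ 0 → p t'.natAbs) := by
    intro a' b' x' y' z' t' c' h
    have r1 := h.trans (stepR _ _ _ _ _ _ _)
    have r2 := r1.trans (stepR _ _ _ _ _ _ _)
    exact ⟨fun h0 => ⟨Int.natAbs_pos.2 h0, _, _, _, _, _, _, _, r2.trans (stepS _ _ _ _ _ _ _), rfl⟩,
      fun h0 => ⟨Int.natAbs_pos.2 h0, _, _, _, _, _, _, _, r2, rfl⟩,
      fun h0 => ⟨Int.natAbs_pos.2 h0, _, _, _, _, _, _, _, h.trans (stepS _ _ _ _ _ _ _), rfl⟩,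
      fun h0 => ⟨Int.natAbs_pos.2 h0, _, _, _, _, _, _, _, h, rfl⟩,
      fun h0 => ⟨Int.natAbs_pos.2 h0, _, _, _, _, _, _, _, r1.trans (stepS _ _ _ _ _ _ _), rfl⟩,
      fun h0 => ⟨Int.natAbs_pos.2 h0, _, _, _, _, _, _, _, r1, rfl⟩⟩
  have rel : ∀ a' b' x' y' z' t' c', Reach (St a b x y z t c) (St a' b' x' y' z' t' c') →
      c' ^ 2 - 1 = 4 * (a' * b' + x' * y' + z' * t') := by
    intro a' b' x' y' z' t' c' h
    have := h.norm
    rw [norm_St, norm_St] at this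
    linarith
  by_cases hp : ∃ m, p m
  · classical
    obtain ⟨hm, a1, b1, x1, y1, z1, t1, c1, hr, hy⟩ := Nat.find_spec hp
    have hmin : ∀ m, p m → Nat.find hp ≤ m := fun m h => Nat.find_min' hp h
    rw [← hy] at hmin hm
    have hy0 : y1 ≠ 0 := Int.natAbs_pos.1 hm
    have red : ∀ v : ℤ, (v % y1 ≠ 0 → p (v % y1).natAbs) → v + (-(v / y1)) * y1 = 0 := by
      intro v hv
      have e : v + (-(v / y1)) * y1 = v % y1 := by
        have := Int.emod_add_mul_ediv v y1
        linarith
      rw [e]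
      by_contra h
      have h1 : |y1| ≤ |v % y1| := by
        rw [Int.abs_eq_natAbs, Int.abs_eq_natAbs]; exact_mod_cast hmin _ (hv h)
      have h2 := Int.emod_lt_abs v hy0
      have h3 := Int.emod_nonneg v hy0
      rw [abs_of_nonneg h3] at h1
      linarith
    have emo : ∀ v : ℤ, v + (-(v / y1)) * y1 = v % y1 := by
      intro v
      have := Int.emod_add_mul_ediv v y1
      linarith
    -- kill z
    have hr := hr.trans (it4 _ _ _ _ _ _ _ (-(z1 / y1)))
    have e := red z1 (by rw [← emo]; exact (mk _ _ _ _ _ _ _ hr).2.2.2.2.1)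
    rw [e] at hr
    generalize x1 - -(z1 / y1) * t1 = x2 at hr
    have hr := hr.trans (it5 _ _ _ _ _ _ _ (-(t1 / y1)))
    have e := red t1 (by rw [← emo]; exact (mk _ _ _ _ _ _ _ hr).2.2.2.2.2)
    rw [e] at hr
    generalize x2 - _ = x3 at hr
    have hr := hr.trans (it0 _ _ _ _ _ _ _ (-(a1 / y1)))
    have e := red a1 (by rw [← emo]; exact (mk _ _ _ _ _ _ _ hr).1)
    rw [e] at hr
    generalize x3 - _ = x4 at hr
    have hr := hr.trans (it1 _ _ _ _ _ _ _ (-(b1 / y1)))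
    have e := red b1 (by rw [← emo]; exact (mk _ _ _ _ _ _ _ hr).2.1)
    rw [e] at hr
    generalize x4 - _ = x5 at hr
    obtain ⟨n, hn⟩ : ∃ n : ℤ, |c1 + 2 * n * y1| ≤ |y1| := by
      refine ⟨-((c1 + |y1|) / (2 * y1)), ?_⟩
      have e1 := Int.emod_add_mul_ediv (c1 + |y1|) (2 * y1)
      have e2 := Int.emod_nonneg (c1 + |y1|) (b := 2 * y1) (by omega)
      have e3 := Int.emod_lt_abs (c1 + |y1|) (b := 2 * y1) (by omega)
      have e4 : |2 * y1| = 2 * |y1| := by rw [abs_mul]; rfl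
      have e5 : c1 + 2 * -((c1 + |y1|) / (2 * y1)) * y1 = (c1 + |y1|) % (2 * y1) - |y1| := by
        linarith
      rw [e5, abs_le]
      constructor <;> linarith
    have hr := hr.trans (itB _ _ _ _ _ _ _ n)
    generalize x5 + n * c1 + n ^ 2 * y1 = x6 at hr
    generalize c1 + 2 * n * y1 = c2 at hr hn
    have hrel := rel _ _ _ _ _ _ _ hr
    have hx : x6 = 0 := by
      by_contra hx
      have h2 : |y1| ≤ |x6| := by
        rw [Int.abs_eq_natAbs, Int.abs_eq_natAbs]
        exact_mod_cast hmin _ ((mk _ _ _ _ _ _ _ hr).2.2.1 hx)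
      have h3 : c2 ^ 2 ≤ y1 ^ 2 := sq_le_sq.2 hn
      have hc0 : c2 ≠ 0 := by
        rintro rfl
        omega
      have h4 : 1 ≤ c2 ^ 2 := by
        have := sq_nonneg c2
        have : c2 ^ 2 ≠ 0 := pow_ne_zero 2 hc0
        omega
      have h5 : |c2 ^ 2 - 1| = 4 * (|x6| * |y1|) := by
        rw [hrel, abs_mul, ← abs_mul]; norm_num
      rw [abs_of_nonneg (by linarith)] at h5
      have h6 : |y1| * |y1| = y1 ^ 2 := by rw [abs_mul_abs_self, sq]
      have h7 : |y1| * |y1| ≤ |x6| * |y1| := mul_le_mul_of_nonneg_right h2 (abs_nonneg _)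
      nlinarith
    subst hx
    refine hr.trans (fin_y _ _ ?_)
    have : c2 ^ 2 = 1 := by linarith
    simpa using this
  · have h := mk _ _ _ _ _ _ _ (Reach.rfl' _)
    have h0 : ∀ v : ℤ, (v ≠ 0 → p v.natAbs) → v = 0 := fun v hv => by
      by_contra h; exact hp ⟨_, hv h⟩
    obtain ⟨k1, k2, k3, k4, k5, k6⟩ := h
    obtain rfl := h0 _ k1
    obtain rfl := h0 _ k2
    obtain rfl := h0 _ k3
    obtain rfl := h0 _ k4
    obtain rfl := h0 _ k5
    obtain rfl := h0 _ k6
    apply fin_y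
    have : c ^ 2 = 1 := by linarith
    simpa using this

end Lat

theorem fix_emb (k : Matrix (Fin 7) (Fin 7) ℤ) (hk : IsIsometry G7 k)
    (h6 : k *ᵥ St 0 0 0 0 0 0 1 = St 0 0 0 0 0 0 1) :
    ∃ h : Matrix (Fin 6) (Fin 6) ℤ, k = emb7 h := by
  have col : ∀ i, k i 6 = St 0 0 0 0 0 0 1 i := by
    intro i
    rw [← h6]
    simp [St, mulVec, dotProduct, Fin.sum_univ_succ]
  have row : ∀ j, -2 * k 6 j = G7 6 j := by
    intro j
    have := congrFun (congrFun hk 6) j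
    rw [← this]
    have hc : ∀ i, (kᵀ * G7) 6 i = (St 0 0 0 0 0 0 1 ᵥ* G7) i := by
      intro i
      simp only [mul_apply, transpose_apply, col, vecMul, dotProduct]
    have hv : St 0 0 0 0 0 0 1 ᵥ* G7 = ![0,0,0,0,0,0,-2] := by decide
    rw [mul_apply]
    simp only [hc, hv]
    simp [Fin.sum_univ_succ]
  refine ⟨k.submatrix Fin.castSucc Fin.castSucc, ?_⟩
  ext i j
  have r := row j
  have c := col i
  fin_cases i <;> fin_cases j <;> first | rfl | exact c | (simp [G7] at r; exact r)

theorem stmt_aux (g : (Matrix (Fin 7) (Fin 7) ℤ)ˣ)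
    (hi : IsIsometry G7 (g : Matrix (Fin 7) (Fin 7) ℤ))
    (hdet : (g : Matrix (Fin 7) (Fin 7) ℤ).det = 1)
    (ho : OrientPres G7 (g : Matrix (Fin 7) (Fin 7) ℤ)) : g ∈ Subgroup.closure GS := by
  obtain ⟨a, b, x, y, z, t, c, hs⟩ : ∃ a b x y z t c,
      (g : Matrix (Fin 7) (Fin 7) ℤ) *ᵥ St 0 0 0 0 0 0 1 = St a b x y z t c := by
    have e : (g : Matrix (Fin 7) (Fin 7) ℤ) *
      ((g⁻¹ : (Matrix (Fin 7) (Fin 7) ℤ)ˣ) : Matrix _ _ ℤ) = 1 := g.mul_inv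
    have i2 := iso_inv hi
    unfold IsIsometry at hi
    have e' : ((g⁻¹ : (Matrix (Fin 7) (Fin 7) ℤ)ˣ) : Matrix _ _ ℤ) *
      (g : Matrix (Fin 7) (Fin 7) ℤ) = 1 := g.inv_mul
    generalize ((g⁻¹ : (Matrix (Fin 7) (Fin 7) ℤ)ˣ) : Matrix (Fin 7) (Fin 7) ℤ) = d at *
    generalize (g : Matrix (Fin 7) (Fin 7) ℤ) = k at *
    have h1 : G7 * k = dᵀ * G7 := by
      unfold IsIsometry at i2
      calc G7 * k = (dᵀ * G7 * d) * k := by rw [i2]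
        _ = dᵀ * G7 * (d * k) := by simp only [Matrix.mul_assoc]
        _ = _ := by rw [e', Matrix.mul_one]
    have h2 : ∀ i, (G7 * k) i 6 = -2 * d 6 i := by
      intro i
      rw [h1, mul_apply]
      simp [G7, Fin.sum_univ_succ]
      rw [mul_comm]
    refine ⟨- d 6 1, - d 6 0, - d 6 3, - d 6 2, - d 6 5, - d 6 4, k 6 6, ?_⟩
    ext i
    have k0 := h2 0
    have k1 := h2 1
    have k2 := h2 2
    have k3 := h2 3
    have k4 := h2 4
    have k5 := h2 5
    simp [mul_apply, G7, Fin.sum_univ_succ] at k0 k1 k2 k3 k4 k5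
    fin_cases i <;> simp [St, mulVec, dotProduct, Fin.sum_univ_succ]
    · exact k1
    · exact k0
    · exact k3
    · exact k2
    · exact k5
    · exact k4
  have hn : St a b x y z t c ⬝ᵥ (G7 *ᵥ St a b x y z t c) = -2 := by
    rw [← hs]
    have e : ∀ v : Fin 7 → ℤ, ((g : Matrix (Fin 7) (Fin 7) ℤ) *ᵥ v) ⬝ᵥ
        (G7 *ᵥ ((g : Matrix (Fin 7) (Fin 7) ℤ) *ᵥ v)) = v ⬝ᵥ (G7 *ᵥ v) := by
      intro v
      have := hi
      unfold IsIsometry at this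
      conv_rhs => rw [← this]
      rw [← mulVec_mulVec, ← mulVec_mulVec, dotProduct_mulVec v, vecMul_transpose]
    rw [e]
    decide
  rw [norm_St] at hn
  obtain ⟨γ, hγ, hw⟩ := descent a b x y z t c (by linarith)
  rw [← hs, mulVec_mulVec] at hw
  have hi2 := iso_mul hγ.2.1 hi
  obtain ⟨h, hh⟩ := fix_emb _ hi2 hw
  have c1 := chi_mul D7 _ _ hγ.2.1 hi hγ.2.2.2 (chi_of_orient D7 _ ho)
  have d1 : ((γ : Matrix (Fin 7) (Fin 7) ℤ) * (g : Matrix (Fin 7) (Fin 7) ℤ)).det = 1 := by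
    rw [det_mul, hγ.2.2.1, hdet, one_mul]
  rw [hh] at hi2 c1 d1
  rw [iso_emb7] at hi2
  rw [chi_emb7] at c1
  rw [det_emb7] at d1
  have : γ * g ∈ Subgroup.closure GS :=
    Subgroup.subset_closure (Or.inl ⟨h, hi2, d1, orient_of_chi D6 h hi2 c1, by simpa using hh⟩)
  exact (Subgroup.mul_mem_cancel_left _ hγ.1).1 this

/-- The subgroup `G` of `O((1,0,-1)^⊥)` of the theorem is generated by:
(i) the restrictions to `(1,0,-1)^⊥` of the isometries of the Mukai lattice `Λ` acting as an
element of `SO⁺(U³)` on `U³` and as the identity on `ℤ ⊕ ℤ`; and (ii) the compositions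
`φ⁻¹ ∘ ĝ ∘ φ`, where `ĝ` is the restriction to `(0,e+f,1)^⊥` of an isometry of `Λ` acting
as an element of `SO⁺(U³)` fixing `e+f` on `U³` and as the identity on `ℤ ⊕ ℤ`.
Then `SO⁺((1,0,-1)^⊥) ⊆ G`.  (The element `φ⁻¹ ∘ ĝ ∘ φ` of `O(K)` is characterized by the
matrix equation `PhiM * g = emb8 h * PhiM`.) -/
theorem stmt_15 :
    {g : (Matrix (Fin 7) (Fin 7) ℤ)ˣ |
        IsIsometry G7 (g : Matrix (Fin 7) (Fin 7) ℤ) ∧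
          (g : Matrix (Fin 7) (Fin 7) ℤ).det = 1 ∧
          OrientPres G7 (g : Matrix (Fin 7) (Fin 7) ℤ)} ⊆
      (Subgroup.closure
        ({g : (Matrix (Fin 7) (Fin 7) ℤ)ˣ |
            ∃ h : Matrix (Fin 6) (Fin 6) ℤ,
              IsIsometry U3G h ∧ h.det = 1 ∧ OrientPres U3G h ∧
              (g : Matrix (Fin 7) (Fin 7) ℤ) = emb7 h} ∪
         {g : (Matrix (Fin 7) (Fin 7) ℤ)ˣ |
            ∃ h : Matrix (Fin 6) (Fin 6) ℤ,
              IsIsometry U3G h ∧ h.det = 1 ∧ OrientPres U3G h ∧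
              h *ᵥ ![1, 1, 0, 0, 0, 0] = ![1, 1, 0, 0, 0, 0] ∧
              PhiM * (g : Matrix (Fin 7) (Fin 7) ℤ) = emb8 h * PhiM}) :
        Set ((Matrix (Fin 7) (Fin 7) ℤ)ˣ)) := by
  rintro g ⟨h1, h2, h3⟩
  exact stmt_aux g h1 h2 h3
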